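/- arXiv:2202.08178 — 3 statements merged into one kernel-verified Lean document; each statement's English description precedes it below -/
import Mathlib

section
/- Minimizers of quadratic functions (Lemma 4.1, second part): Let H be a Hilbert space over 𝕜 (𝕜 = ℝ or ℂ), P a bounded non-negative self-adjoint operator on H (⟨Px,x⟩ ≥ 0 for all x), w ∈ H, and define V_{P,w} : H → ℝ by V_{P,w}(x) := ⟨Px,x⟩ + 2Re⟨w,x⟩. Then V_{P,w} has a minimizer if and only if w ∈ ran P; and in that case the set of minimizers of V_{P,w} equals {x ∈ H : Px = −w}. -/
open scoped InnerProductSpace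
open RCLike ContinuousLinearMap

/-!
Write `V = V_{T,w}`. Symmetry of `T` gives `V (m + h) = V m + re ⟪T h, h⟫ + 2 re ⟪T m + w, h⟫`.
If `m` is a minimizer, then along each line `ℝ h` the increment is a nonnegative quadratic
polynomial without constant term, so its linear coefficient vanishes and `T m + w = 0`.
If `T m + w = 0`, the increment is `re ⟪T h, h⟫ ≥ 0`.
-/

theorem eq_zero_of_forall_quadratic_nonneg {K : Type*} [Field K] [LinearOrder K]
    [IsStrictOrderedRing K] {a b : K} (h : ∀ t : K, 0 ≤ a * (t * t) + b * t) : b = 0 := by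
  have discrim_nonpos : discrim a b 0 ≤ 0 := discrim_le_zero fun t => by simpa using h t
  have sq_nonpos : b ^ 2 ≤ 0 := by simpa [discrim] using discrim_nonpos
  exact (sq_nonpos_iff b).mp sq_nonpos

section QuadraticFunctional

/-- The function `V_{T,w}(x) = ⟨Tx,x⟩ + 2 Re⟨w,x⟩` whose minimizers are studied. The real part of
`⟨Tx,x⟩` is taken so that the value is real for every linear map `T`, symmetric or not. -/
def quadraticFunctional {𝕜 H : Type*} [RCLike 𝕜] [SeminormedAddCommGroup H]
    [InnerProductSpace 𝕜 H] (T : H →ₗ[𝕜] H) (w x : H) : ℝ :=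
  re ⟪T x, x⟫_𝕜 + 2 * re ⟪w, x⟫_𝕜

section Seminormed

variable {𝕜 H : Type*} [RCLike 𝕜] [SeminormedAddCommGroup H] [InnerProductSpace 𝕜 H]
  {T : H →ₗ[𝕜] H}

theorem quadraticFunctional_add (hT : T.IsSymmetric) (w m h : H) :
    quadraticFunctional T w (m + h) =
      quadraticFunctional T w m + (re ⟪T h, h⟫_𝕜 + 2 * re ⟪T m + w, h⟫_𝕜) := by
  have cross_terms_eq : re ⟪T h, m⟫_𝕜 = re ⟪T m, h⟫_𝕜 := by rw [hT h m, inner_re_symm]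
  simp only [quadraticFunctional, map_add, inner_add_left, inner_add_right, cross_terms_eq]
  ring

theorem quadraticFunctional_add_smul (hT : T.IsSymmetric) (w m h : H) (t : ℝ) :
    quadraticFunctional T w (m + (t : 𝕜) • h) =
      quadraticFunctional T w m +
        (re ⟪T h, h⟫_𝕜 * (t * t) + 2 * re ⟪T m + w, h⟫_𝕜 * t) := by
  rw [quadraticFunctional_add hT, map_smul, inner_smul_left, inner_smul_right, inner_smul_right,
    conj_ofReal, re_ofReal_mul, re_ofReal_mul, re_ofReal_mul]
  ring

theorem re_inner_eq_zero_of_forall_quadraticFunctional_le (hT : T.IsSymmetric) {w m : H}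
    (hm : ∀ x, quadraticFunctional T w m ≤ quadraticFunctional T w x) (h : H) :
    re ⟪T m + w, h⟫_𝕜 = 0 := by
  have linear_coeff_eq_zero : 2 * re ⟪T m + w, h⟫_𝕜 = 0 :=
    eq_zero_of_forall_quadratic_nonneg fun t => by
      simpa only [quadraticFunctional_add_smul hT, le_add_iff_nonneg_right]
        using hm (m + (t : 𝕜) • h)
  exact (mul_eq_zero_iff_left two_ne_zero).mp linear_coeff_eq_zero

theorem quadraticFunctional_le_of_apply_eq_neg (hT : T.IsSymmetric)
    (hT_nonneg : ∀ x, 0 ≤ re ⟪T x, x⟫_𝕜) {w m : H} (hm : T m = -w) (x : H) :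
    quadraticFunctional T w m ≤ quadraticFunctional T w x := by
  have gradient_eq_zero : T m + w = 0 := add_eq_zero_iff_eq_neg.mpr hm
  calc quadraticFunctional T w m
      ≤ quadraticFunctional T w m + re ⟪T (x - m), x - m⟫_𝕜 :=
        le_add_of_nonneg_right (hT_nonneg (x - m))
    _ = quadraticFunctional T w (m + (x - m)) := by
        rw [quadraticFunctional_add hT, gradient_eq_zero, inner_zero_left, map_zero, mul_zero,
          add_zero]
    _ = quadraticFunctional T w x := by rw [add_sub_cancel]

end Seminormed

variable {𝕜 H : Type*} [RCLike 𝕜] [NormedAddCommGroup H] [InnerProductSpace 𝕜 H]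
  {T : H →ₗ[𝕜] H}

theorem apply_eq_neg_of_forall_quadraticFunctional_le (hT : T.IsSymmetric) {w m : H}
    (hm : ∀ x, quadraticFunctional T w m ≤ quadraticFunctional T w x) : T m = -w := by
  rw [← add_eq_zero_iff_eq_neg, ← re_inner_self_nonpos (𝕜 := 𝕜)]
  exact (re_inner_eq_zero_of_forall_quadraticFunctional_le hT hm (T m + w)).le

theorem forall_quadraticFunctional_le_iff (hT : T.IsPositive) {w m : H} :
    (∀ x, quadraticFunctional T w m ≤ quadraticFunctional T w x) ↔ T m = -w :=
  ⟨apply_eq_neg_of_forall_quadraticFunctional_le hT.isSymmetric,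
    quadraticFunctional_le_of_apply_eq_neg hT.isSymmetric hT.re_inner_nonneg_left⟩

theorem quadratic_minimizer_iff_general (hT : T.IsPositive) (w : H) :
    ((∃ m, ∀ x, quadraticFunctional T w m ≤ quadraticFunctional T w x) ↔ w ∈ Set.range T) ∧
      {m | ∀ x, quadraticFunctional T w m ≤ quadraticFunctional T w x} = {x | T x = -w} := by
  simp only [forall_quadraticFunctional_le_iff hT, and_true]
  calc (∃ m, T m = -w)
      ↔ -w ∈ LinearMap.range T := LinearMap.mem_range.symm
    _ ↔ w ∈ LinearMap.range T := neg_mem_iff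

end QuadraticFunctional

/-- **Lemma 4.1, second part**: for a bounded non-negative self-adjoint operator `P`,
the quadratic function `V_{P,w}(x) = ⟨Px,x⟩ + 2Re⟨w,x⟩` has a minimizer if and only
if `w ∈ ran P`, in which case the set of minimizers is `{x : Px = -w}`. -/
theorem quadratic_minimizer_iff
    {𝕜 H : Type*} [RCLike 𝕜]
    [NormedAddCommGroup H] [InnerProductSpace 𝕜 H] [CompleteSpace H]
    (P : H →L[𝕜] H) (hP : IsSelfAdjoint P)
    (hPnonneg : ∀ x : H, 0 ≤ re ⟪P x, x⟫_𝕜) (w : H) :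
    ((∃ xm : H, ∀ x : H,
        re ⟪P xm, xm⟫_𝕜 + 2 * re ⟪w, xm⟫_𝕜 ≤ re ⟪P x, x⟫_𝕜 + 2 * re ⟪w, x⟫_𝕜)
      ↔ w ∈ Set.range P)
    ∧
    (w ∈ Set.range P →
      {xm : H | ∀ x : H,
        re ⟪P xm, xm⟫_𝕜 + 2 * re ⟪w, xm⟫_𝕜 ≤ re ⟪P x, x⟫_𝕜 + 2 * re ⟪w, x⟫_𝕜}
      = {x : H | P x = -w}) := by
  exact (quadratic_minimizer_iff_general (T := (P : H →ₗ[𝕜] H))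
    ⟨hP.isSymmetric, hPnonneg⟩ w).imp_right fun minimizers_eq _ => minimizers_eq
end

section
/- Boundedness from below of the stage cost (Corollary 4.2): Let H, U, Y, Z be Hilbert spaces over 𝕜 (𝕜 = ℝ or ℂ), C : H → Y and K : U → Z bounded linear operators, z ∈ H, v ∈ U, and define ℓ : H × U → ℝ by ℓ(x,u) := ‖Cx‖² + ‖Ku‖² + 2Re⟨z,x⟩ + 2Re⟨v,u⟩. Then ℓ is bounded from below on H × U if and only if z ∈ ran C* and v ∈ ran K*. -/
open scoped InnerProductSpace
open RCLike ContinuousLinearMap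

/-!
The cost is a sum of a function of `x` and a function of `u`, so it suffices to treat
`‖C x‖² + 2 Re ⟪z, x⟫`. Replacing `x` by `t c x` with `t` real and `c` a unimodular scalar chosen
so that `c ⟪z, x⟫ = |⟪z, x⟫|` gives a real quadratic polynomial in `t`; that it is bounded below
uniformly in `x` means, by its discriminant, that `|⟪z, x⟫| ≤ M ‖C x‖` for some constant `M`.
Such a bound says that `⟪z, ·⟫` factors through `C` as a bounded functional on `ran C`. By
Hahn–Banach and Riesz, that functional is `⟪y, ·⟫` for some `y`, that is, `z = C* y`.
-/

open scoped NNReal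

theorem exists_forall_le_add_iff {α β G : Type*} [Nonempty α] [Nonempty β]
    [AddCommGroup G] [Preorder G] [AddLeftMono G] (f : α → G) (g : β → G) :
    (∃ c, ∀ a b, c ≤ f a + g b) ↔ (∃ c, ∀ a, c ≤ f a) ∧ ∃ c, ∀ b, c ≤ g b := by
  constructor
  · rintro ⟨c, hc⟩
    obtain ⟨a₀⟩ := ‹Nonempty α›
    obtain ⟨b₀⟩ := ‹Nonempty β›
    exact ⟨⟨c - g b₀, fun a => sub_le_iff_le_add.2 (hc a b₀)⟩,
      ⟨c - f a₀, fun b => sub_le_iff_le_add'.2 (hc a₀ b)⟩⟩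
  · rintro ⟨⟨c, hc⟩, ⟨d, hd⟩⟩
    exact ⟨c + d, fun a b => add_le_add (hc a) (hd b)⟩

section Seminorm

variable {𝕜 E : Type*} [RCLike 𝕜] [AddCommGroup E] [Module 𝕜 E]

theorem norm_le_sqrt_neg_mul_of_forall_le_seminorm_sq_add_re {p : Seminorm 𝕜 E}
    {f : Module.Dual 𝕜 E} {c : ℝ} (hc : ∀ x, c ≤ p x ^ 2 + 2 * re (f x)) (x : E) :
    ‖f x‖ ≤ √(-c) * p x := by
  obtain ⟨ω, norm_ω, hω⟩ := RCLike.exists_norm_eq_mul_self (f x)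
  have quadratic_nonneg (t : ℝ) : 0 ≤ p x ^ 2 * (t * t) + 2 * ‖f x‖ * t + -c := by
    have seminorm_eq : p ((t : 𝕜) • ω • x) = |t| * p x := by
      simp [map_smul_eq_mul, norm_ω]
    have re_eq : re (f ((t : 𝕜) • ω • x)) = t * ‖f x‖ := by
      rw [f.map_smul, f.map_smul, smul_eq_mul, smul_eq_mul, ← hω, re_ofReal_mul, ofReal_re]
    have bound := hc ((t : 𝕜) • ω • x)
    rw [seminorm_eq, re_eq, mul_pow, sq_abs] at bound
    linarith
  have discrim_nonpos := discrim_le_zero quadratic_nonneg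
  have sq_le : ‖f x‖ ^ 2 ≤ -c * p x ^ 2 := by
    rw [discrim] at discrim_nonpos
    linarith
  calc
    ‖f x‖ ≤ √(-c * p x ^ 2) := Real.le_sqrt_of_sq_le sq_le
    _ = √(-c) * p x := by
      rw [Real.sqrt_mul' _ (sq_nonneg _), Real.sqrt_sq (apply_nonneg p x)]

theorem exists_forall_le_seminorm_sq_add_re_iff (p : Seminorm 𝕜 E) (f : Module.Dual 𝕜 E) :
    (∃ c : ℝ, ∀ x, c ≤ p x ^ 2 + 2 * re (f x)) ↔ ∃ M : ℝ≥0, ∀ x, ‖f x‖ ≤ M * p x := by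
  constructor
  · rintro ⟨c, hc⟩
    exact ⟨⟨√(-c), Real.sqrt_nonneg _⟩,
      norm_le_sqrt_neg_mul_of_forall_le_seminorm_sq_add_re hc⟩
  · rintro ⟨M, hM⟩
    refine ⟨-M ^ 2, fun x => ?_⟩
    have neg_le_re : -(M * p x) ≤ re (f x) :=
      neg_le_of_abs_le ((abs_re_le_norm _).trans (hM x))
    linarith [sq_nonneg (p x - M)]

end Seminorm

section HahnBanach

variable {𝕜 E F : Type*} [AddCommGroup E]

theorem exists_dual_comp_eq_of_norm_le_seminorm [NormedField 𝕜] [IsRCLikeNormedField 𝕜]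
    [Module 𝕜 E] [AddCommGroup F] [Module 𝕜 F] {f : Module.Dual 𝕜 E} {T : E →ₗ[𝕜] F}
    {p : Seminorm 𝕜 F} (hf : ∀ x, ‖f x‖ ≤ p (T x)) :
    ∃ g : Module.Dual 𝕜 F, g ∘ₗ T = f ∧ ∀ y, ‖g y‖ ≤ p y := by
  have f_mem_range : f ∈ LinearMap.range T.dualMap := by
    rw [LinearMap.range_dualMap_eq_dualAnnihilator_ker, Submodule.mem_dualAnnihilator]
    intro x hx
    simpa [LinearMap.mem_ker.1 hx] using hf x
  obtain ⟨g₀, rfl⟩ := f_mem_range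
  obtain ⟨g, hg, g_le⟩ := Module.Dual.exists_extension_of_le_seminorm (LinearMap.range T)
    (g₀.domRestrict (LinearMap.range T)) (p := p) (by rintro ⟨_, x, rfl⟩; exact hf x)
  exact ⟨g, LinearMap.ext fun x => hg ⟨T x, x, rfl⟩, g_le⟩

theorem exists_strongDual_comp_eq_iff [RCLike 𝕜] [Module 𝕜 E] [SeminormedAddCommGroup F]
    [NormedSpace 𝕜 F] (f : Module.Dual 𝕜 E) (T : E →ₗ[𝕜] F) :
    (∃ g : StrongDual 𝕜 F, ∀ x, g (T x) = f x) ↔ ∃ M : ℝ≥0, ∀ x, ‖f x‖ ≤ M * ‖T x‖ := by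
  constructor
  · rintro ⟨g, hg⟩
    exact ⟨‖g‖₊, fun x => hg x ▸ g.le_opNorm (T x)⟩
  · rintro ⟨M, hM⟩
    obtain ⟨g, hg, g_le⟩ :=
      exists_dual_comp_eq_of_norm_le_seminorm (p := M • normSeminorm 𝕜 F) hM
    exact ⟨g.mkContinuous M g_le, LinearMap.congr_fun hg⟩

end HahnBanach

section Adjoint

variable {𝕜 H Y : Type*} [RCLike 𝕜]
  [NormedAddCommGroup H] [InnerProductSpace 𝕜 H] [CompleteSpace H]
  [NormedAddCommGroup Y] [InnerProductSpace 𝕜 Y] [CompleteSpace Y]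

theorem mem_range_adjoint_iff_exists_norm_inner_le (C : H →L[𝕜] Y) (z : H) :
    z ∈ Set.range (adjoint C) ↔ ∃ M : ℝ≥0, ∀ x, ‖⟪z, x⟫_𝕜‖ ≤ M * ‖C x‖ := by
  have adjoint_eq_iff (y : Y) : adjoint C y = z ↔ ∀ x, ⟪y, C x⟫_𝕜 = ⟪z, x⟫_𝕜 := by
    rw [ext_iff_inner_right 𝕜]
    simp only [adjoint_inner_left]
  calc
    z ∈ Set.range (adjoint C) ↔ ∃ y, ∀ x, ⟪y, C x⟫_𝕜 = ⟪z, x⟫_𝕜 := exists_congr adjoint_eq_iff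
    _ ↔ ∃ g : StrongDual 𝕜 Y, ∀ x, g (C x) = ⟪z, x⟫_𝕜 := by
      simp only [(InnerProductSpace.toDual 𝕜 Y).surjective.exists,
        InnerProductSpace.toDual_apply_apply]
    _ ↔ ∃ M : ℝ≥0, ∀ x, ‖⟪z, x⟫_𝕜‖ ≤ M * ‖C x‖ :=
      exists_strongDual_comp_eq_iff (innerSL 𝕜 z).toLinearMap C.toLinearMap

theorem exists_forall_le_norm_sq_add_re_inner_iff (C : H →L[𝕜] Y) (z : H) :
    (∃ c : ℝ, ∀ x, c ≤ ‖C x‖ ^ 2 + 2 * re ⟪z, x⟫_𝕜) ↔ z ∈ Set.range (adjoint C) := by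
  rw [mem_range_adjoint_iff_exists_norm_inner_le]
  exact exists_forall_le_seminorm_sq_add_re_iff ((normSeminorm 𝕜 Y).comp C.toLinearMap)
    (innerSL 𝕜 z).toLinearMap

end Adjoint

/-- **Corollary 4.2**: the stage cost
`ℓ(x,u) = ‖Cx‖² + ‖Ku‖² + 2Re⟨z,x⟩ + 2Re⟨v,u⟩` is bounded from below on `H × U`
if and only if `z ∈ ran C*` and `v ∈ ran K*`. -/
theorem stage_cost_bddBelow_iff
    {𝕜 H U Y Z : Type*} [RCLike 𝕜]
    [NormedAddCommGroup H] [InnerProductSpace 𝕜 H] [CompleteSpace H]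
    [NormedAddCommGroup U] [InnerProductSpace 𝕜 U] [CompleteSpace U]
    [NormedAddCommGroup Y] [InnerProductSpace 𝕜 Y] [CompleteSpace Y]
    [NormedAddCommGroup Z] [InnerProductSpace 𝕜 Z] [CompleteSpace Z]
    (C : H →L[𝕜] Y) (K : U →L[𝕜] Z) (z : H) (v : U) :
    (∃ cb : ℝ, ∀ (x : H) (u : U),
        cb ≤ ‖C x‖ ^ 2 + ‖K u‖ ^ 2 + 2 * re ⟪z, x⟫_𝕜 + 2 * re ⟪v, u⟫_𝕜)
    ↔
    (z ∈ Set.range (adjoint C : Y → H) ∧ v ∈ Set.range (adjoint K : Z → U)) := by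
  have cost_eq_add (x : H) (u : U) :
      ‖C x‖ ^ 2 + ‖K u‖ ^ 2 + 2 * re ⟪z, x⟫_𝕜 + 2 * re ⟪v, u⟫_𝕜 =
        (‖C x‖ ^ 2 + 2 * re ⟪z, x⟫_𝕜) + (‖K u‖ ^ 2 + 2 * re ⟪v, u⟫_𝕜) := by
    ring
  simp only [cost_eq_add]
  rw [exists_forall_le_add_iff, exists_forall_le_norm_sq_add_re_inner_iff,
    exists_forall_le_norm_sq_add_re_inner_iff]
end

section
/- Joint coercivity estimate from the Lyapunov-like form inequality (intermediate step in the proof of Theorem 4.5): Let H, U, Y, Z be Hilbert spaces over 𝕜 (𝕜 = ℝ or ℂ), A a densely defined linear operator in H with domain dom A, B : U → H, C : H → Y, K : U → Z bounded linear operators, and P a bounded self-adjoint operator on H. Assume there exists c_K > 0 with ‖Ku‖ ≥ c_K‖Bu‖ for all u ∈ U, and there exists m > 0 with ‖Cx‖² − 2Re⟨Ax, Px⟩ ≥ m‖x‖² for all x ∈ dom A. Then there exist γ ∈ (0,1) and c > 0 such that ‖Cx‖² + ‖Ku‖² − 2γ Re⟨Ax + Bu, Px⟩ ≥ c‖x‖²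 for all x ∈ dom A and all u ∈ U. -/
open scoped InnerProductSpace
open RCLike ContinuousLinearMap

/-!
Scaling the Lyapunov inequality by `γ ∈ (0, 1)` leaves only the cross term `2γ Re⟨Bu, Px⟩` to be
controlled. Young's inequality, weighted so that the `Bu` part is exactly `c_K²‖Bu‖² ≤ ‖Ku‖²`,
costs `γ²(‖P‖ / c_K)²‖x‖²`. This loss is quadratic in `γ` while the gain `γ m‖x‖²` is linear, so
a small `γ` leaves a positive remainder.
-/

section

variable {𝕜 H : Type*} [RCLike 𝕜] [SeminormedAddCommGroup H] [InnerProductSpace 𝕜 H]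

theorem two_mul_re_inner_le_mul_sq_add_sq_div (x y : H) {ε : ℝ} (hε : 0 < ε) :
    2 * re ⟪x, y⟫_𝕜 ≤ ε * ‖x‖ ^ 2 + ‖y‖ ^ 2 / ε := by
  calc 2 * re ⟪x, y⟫_𝕜 ≤ 2 * (‖x‖ * ‖y‖) := by gcongr; exact re_inner_le_norm x y
    _ = 2 * ‖x‖ * ‖y‖ := by ring
    _ ≤ ε * ‖x‖ ^ 2 + ε⁻¹ * ‖y‖ ^ 2 := two_mul_le_add_mul_sq hε
    _ = ε * ‖x‖ ^ 2 + ‖y‖ ^ 2 / ε := by rw [inv_mul_eq_div]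

theorem two_mul_re_inner_le_sq_add_mul_sq {b p : H} {c k q γ : ℝ} (hc : 0 < c) (hγ : 0 < γ)
    (hb : c * ‖b‖ ≤ k) (hp : ‖p‖ ≤ q) :
    2 * γ * re ⟪b, p⟫_𝕜 ≤ k ^ 2 + γ ^ 2 * (q / c) ^ 2 := by
  calc 2 * γ * re ⟪b, p⟫_𝕜 = γ * (2 * re ⟪b, p⟫_𝕜) := by ring
    _ ≤ γ * (c ^ 2 / γ * ‖b‖ ^ 2 + ‖p‖ ^ 2 / (c ^ 2 / γ)) := by
      gcongr
      exact two_mul_re_inner_le_mul_sq_add_sq_div b p (by positivity)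
    _ = (c * ‖b‖) ^ 2 + γ ^ 2 * (‖p‖ / c) ^ 2 := by field_simp
    _ ≤ k ^ 2 + γ ^ 2 * (q / c) ^ 2 := by gcongr

theorem mul_sq_le_sq_add_sq_sub_two_mul_re_inner_add {y b p : H} {a c k m M ξ γ : ℝ}
    (hc : 0 < c) (hγ : 0 < γ) (hγ_le : γ ≤ 1) (hb : c * ‖b‖ ≤ k) (hp : ‖p‖ ≤ M * ξ)
    (hy : m * ξ ^ 2 ≤ a ^ 2 - 2 * re ⟪y, p⟫_𝕜) :
    γ * (m - γ * (M / c) ^ 2) * ξ ^ 2 ≤ a ^ 2 + k ^ 2 - 2 * γ * re ⟪y + b, p⟫_𝕜 := by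
  have cross_term : 2 * γ * re ⟪b, p⟫_𝕜 ≤ k ^ 2 + γ ^ 2 * (M * ξ / c) ^ 2 :=
    two_mul_re_inner_le_sq_add_mul_sq hc hγ hb hp
  calc γ * (m - γ * (M / c) ^ 2) * ξ ^ 2
      = γ * (m * ξ ^ 2) - γ ^ 2 * (M * ξ / c) ^ 2 := by ring
    _ ≤ γ * (a ^ 2 - 2 * re ⟪y, p⟫_𝕜) + (k ^ 2 - 2 * γ * re ⟪b, p⟫_𝕜) := by
      have scaled := mul_le_mul_of_nonneg_left hy hγ.le
      linarith
    _ = γ * a ^ 2 + k ^ 2 - 2 * γ * re ⟪y + b, p⟫_𝕜 := by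
      rw [inner_add_left, map_add]
      ring
    _ ≤ a ^ 2 + k ^ 2 - 2 * γ * re ⟪y + b, p⟫_𝕜 := by
      gcongr
      exact mul_le_of_le_one_left (sq_nonneg a) hγ_le

theorem joint_coercivity_of_lyapunov_form_inequality_general
    {U Y Z : Type*} [SeminormedAddCommGroup Y] [SeminormedAddCommGroup Z] {D : Set H}
    (A : D → H) (B : U → H) (C : H → Y) (K : U → Z) (P : H → H)
    {M : ℝ} (hP : ∀ x : D, ‖P x‖ ≤ M * ‖(x : H)‖)
    {cK : ℝ} (hcK : 0 < cK) (hKB : ∀ u : U, cK * ‖B u‖ ≤ ‖K u‖)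
    {m : ℝ} (hm : 0 < m)
    (hLyap : ∀ x : D, m * ‖(x : H)‖ ^ 2 ≤ ‖C x‖ ^ 2 - 2 * re ⟪A x, P x⟫_𝕜) :
    ∃ γ : ℝ, 0 < γ ∧ γ < 1 ∧ ∃ c : ℝ, 0 < c ∧
      ∀ (x : D) (u : U),
        c * ‖(x : H)‖ ^ 2 ≤
          ‖C x‖ ^ 2 + ‖K u‖ ^ 2 - 2 * γ * re ⟪A x + B u, P x⟫_𝕜 := by
  obtain ⟨γ, hγ, hγ_lt⟩ := exists_pos_mul_lt hm (m + (M / cK) ^ 2)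
  have gain_pos : 0 < γ * m := mul_pos hγ hm
  have loss_nonneg : 0 ≤ γ * (M / cK) ^ 2 := by positivity
  have hγ_lt_one : γ < 1 := lt_of_mul_lt_mul_right (by linarith : γ * m < 1 * m) hm.le
  have remainder_pos : 0 < m - γ * (M / cK) ^ 2 := by linarith
  exact ⟨γ, hγ, hγ_lt_one, γ * (m - γ * (M / cK) ^ 2), mul_pos hγ remainder_pos, fun x u ↦
    mul_sq_le_sq_add_sq_sub_two_mul_re_inner_add hcK hγ hγ_lt_one.le (hKB u) (hP x) (hLyap x)⟩

end

/-- **Intermediate step in the proof of Theorem 4.5**: if `‖Ku‖ ≥ c_K‖Bu‖` for all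
`u` and the Lyapunov-like form inequality `‖Cx‖² - 2Re⟨Ax, Px⟩ ≥ m‖x‖²` holds on
`dom A`, then there are `γ ∈ (0,1)` and `c > 0` with
`‖Cx‖² + ‖Ku‖² - 2γ Re⟨Ax + Bu, Px⟩ ≥ c‖x‖²` for all `x ∈ dom A`, `u ∈ U`. -/
theorem joint_coercivity_of_lyapunov_form_inequality
    {𝕜 H U Y Z : Type*} [RCLike 𝕜]
    [NormedAddCommGroup H] [InnerProductSpace 𝕜 H] [CompleteSpace H]
    [NormedAddCommGroup U] [InnerProductSpace 𝕜 U] [CompleteSpace U]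
    [NormedAddCommGroup Y] [InnerProductSpace 𝕜 Y] [CompleteSpace Y]
    [NormedAddCommGroup Z] [InnerProductSpace 𝕜 Z] [CompleteSpace Z]
    (A : H →ₗ.[𝕜] H) (hA : Dense (A.domain : Set H))
    (B : U →L[𝕜] H) (C : H →L[𝕜] Y) (K : U →L[𝕜] Z)
    (P : H →L[𝕜] H) (hP : IsSelfAdjoint P)
    (cK : ℝ) (hcK : 0 < cK) (hKB : ∀ u : U, cK * ‖B u‖ ≤ ‖K u‖)
    (m : ℝ) (hm : 0 < m)
    (hLyap : ∀ x : A.domain,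
      m * ‖(x : H)‖ ^ 2 ≤ ‖C (x : H)‖ ^ 2 - 2 * re ⟪A x, P (x : H)⟫_𝕜) :
    ∃ γ : ℝ, 0 < γ ∧ γ < 1 ∧ ∃ c : ℝ, 0 < c ∧
      ∀ (x : A.domain) (u : U),
        c * ‖(x : H)‖ ^ 2 ≤
          ‖C (x : H)‖ ^ 2 + ‖K u‖ ^ 2 - 2 * γ * re ⟪A x + B u, P (x : H)⟫_𝕜 :=
  joint_coercivity_of_lyapunov_form_inequality_general (D := A.domain) A B C K P
    (fun x ↦ P.le_opNorm x) hcK hKB hm hLyap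
end
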